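/- For every (x,y) ∈ ℝ², the second Reissner–Mindlin equation with unit load holds for the pair (θ, w): −λ t⁻² ∇·(∇w − θ)(x,y) = 1. -/

import Mathlib

/-!
The shear vector `∇w - θ` is linear: differentiating `w`, the terms carrying `1 / D` reproduce `θ`
exactly, and what is left is `-(t² / (2λ)) (x, y)`. Its divergence is `-t² / λ`, and multiplying by
`-λ t⁻²` gives `1` because `λ` and `t` are nonzero.
-/

noncomputable section

open Set

/-- Partial derivative in the first variable. -/
def pdx (f : ℝ → ℝ → ℝ) (x y : ℝ) : ℝ := deriv (fun s => f s y) x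

/-- Partial derivative in the second variable. -/
def pdy (f : ℝ → ℝ → ℝ) (x y : ℝ) : ℝ := deriv (fun s => f x s) y

/-- Young's modulus. -/
def E : ℝ := 1.092

/-- Poisson's ratio. -/
def ν : ℝ := 0.3

/-- D = E / (12 (1 - ν²)). -/
def Dc : ℝ := E / (12 * (1 - ν ^ 2))

/-- Shear correction factor λ = 5E / (12 (1 + ν)). -/
def lam : ℝ := 5 * E / (12 * (1 + ν))

/-- First component of the rotation field θ. -/
def θ₁ (x y : ℝ) : ℝ := (1 / (16 * Dc)) * (x * (x ^ 2 + y ^ 2 - 1))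

/-- Second component of the rotation field θ. -/
def θ₂ (x y : ℝ) : ℝ := (1 / (16 * Dc)) * (y * (x ^ 2 + y ^ 2 - 1))

/-- Transverse displacement w (depending on the thickness t). -/
def w (t x y : ℝ) : ℝ :=
  (x ^ 2 + y ^ 2) ^ 2 / (64 * Dc)
    - (x ^ 2 + y ^ 2 - 1) * (t ^ 2 / (4 * lam) + 1 / (32 * Dc))
    - 1 / (64 * Dc)

/-- First component of the row-wise divergence of C ε(θ), where
    (C τ) = D ((1-ν) τ + ν tr(τ) I₂) and ε(θ) = (∇θ + ∇θᵀ)/2. -/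
def divCeps₁ (f₁ f₂ : ℝ → ℝ → ℝ) (x y : ℝ) : ℝ :=
  pdx (fun a b => Dc * ((1 - ν) * pdx f₁ a b + ν * (pdx f₁ a b + pdy f₂ a b))) x y
    + pdy (fun a b => Dc * ((1 - ν) * ((pdy f₁ a b + pdx f₂ a b) / 2))) x y

/-- Second component of the row-wise divergence of C ε(θ). -/
def divCeps₂ (f₁ f₂ : ℝ → ℝ → ℝ) (x y : ℝ) : ℝ :=
  pdx (fun a b => Dc * ((1 - ν) * ((pdy f₁ a b + pdx f₂ a b) / 2))) x y
    + pdy (fun a b => Dc * ((1 - ν) * pdy f₂ a b + ν * (pdx f₁ a b + pdy f₂ a b))) x y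

/-- Divergence of the shear vector ∇w - θ. -/
def divShear (W f₁ f₂ : ℝ → ℝ → ℝ) (x y : ℝ) : ℝ :=
  pdx (fun a b => pdx W a b - f₁ a b) x y + pdy (fun a b => pdy W a b - f₂ a b) x y

theorem lam_ne_zero : lam ≠ 0 := by
  norm_num [lam, E, ν]

/-- First component of the shear vector. The identity holds whatever the value of `Dc`, `1 / Dc`
entering linearly. -/
theorem pdx_w_sub_θ₁ (t a b : ℝ) : pdx (w t) a b - θ₁ a b = -(t ^ 2 / (2 * lam)) * a := by
  have hr : HasDerivAt (fun s : ℝ => s ^ 2 + b ^ 2) (2 * a) a := by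
    simpa using (hasDerivAt_pow 2 a).add_const (b ^ 2)
  have h : HasDerivAt (fun s => w t s b)
      (2 * (a ^ 2 + b ^ 2) * (2 * a) / (64 * Dc)
        - 2 * a * (t ^ 2 / (4 * lam) + 1 / (32 * Dc))) a := by
    simpa [w] using (((hr.fun_pow 2).div_const (64 * Dc)).fun_sub
      ((hr.sub_const 1).mul_const (t ^ 2 / (4 * lam) + 1 / (32 * Dc)))).sub_const (1 / (64 * Dc))
  rw [pdx, h.deriv, θ₁]
  ring

theorem w_symm (t a b : ℝ) : w t a b = w t b a := by
  simp only [w, add_comm]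

/-- Second component of the shear vector, obtained from the first by the symmetry exchanging the
two coordinates. -/
theorem pdy_w_sub_θ₂ (t a b : ℝ) : pdy (w t) a b - θ₂ a b = -(t ^ 2 / (2 * lam)) * b := by
  have hw : pdy (w t) a b = pdx (w t) b a := by
    simp only [pdx, pdy, w_symm t a]
  have hθ : θ₂ a b = θ₁ b a := by
    simp only [θ₁, θ₂, add_comm]
  rw [hw, hθ, pdx_w_sub_θ₁]

theorem divShear_w_θ (t x y : ℝ) : divShear (w t) θ₁ θ₂ x y = -(t ^ 2 / lam) := by
  simp only [divShear, pdx_w_sub_θ₁, pdy_w_sub_θ₂]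
  have h (c z : ℝ) : deriv (fun s => c * s) z = c := by
    simp
  rw [pdx, pdy, h, h]
  ring

/-- the second Reissner–Mindlin equation with unit load
−λ t⁻² ∇·(∇w − θ) = 1 holds at every point of ℝ². -/
theorem reissner_mindlin_disk_second_equation (t : ℝ) (ht : 0 < t) :
    ∀ x y : ℝ, -(lam * t⁻¹ ^ 2) * divShear (w t) θ₁ θ₂ x y = 1 := by
  intro x y
  have hl := lam_ne_zero
  rw [divShear_w_θ]
  field_simp
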